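/- For every sorted parking function p of size n with shape λ(p) having ℓ parts, the number of sign vectors σ̄ ∈ {-1,0,1}^n making (p, σ̄) a sorted naive shifted parking function is 2^ℓ; consequently, the number of sorted naive shifted parking functions of size n with shape μ is 2^{ℓ(μ)} · Krew(μ). -/

import Mathlib

open Finset

/-- `p` is a sorted parking function of size `n`: weakly increasing with
`1 ≤ p i ≤ i` (1-indexed). -/
def IsSortedPF (n : ℕ) (p : Fin n → ℕ) : Prop :=
  Monotone p ∧ ∀ i : Fin n, 0 < p i ∧ p i ≤ (i : ℕ) + 1

/-- `σ̄ ∈ {-1,0,1}ⁿ` is a valid sign vector for `p`: `σ̄_k = 0` iff no entry of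
`p` equals `k`. -/
def IsSignVector (n : ℕ) (p : Fin n → ℕ) (σ : Fin n → ℤ) : Prop :=
  ∀ k : Fin n, (σ k = -1 ∨ σ k = 0 ∨ σ k = 1) ∧
    (σ k = 0 ↔ ∀ j : Fin n, p j ≠ (k : ℕ) + 1)

/-- The shape of `p`: the multiset of the positive multiplicities
`α_k(p) = #{j : p_j = k}`, `k = 1, …, n`. -/
def shapeOf (n : ℕ) (p : Fin n → ℕ) : Multiset ℕ :=
  Multiset.filter (fun m => 0 < m)
    (Multiset.map (fun k => (Finset.univ.filter fun j => p j = k).card) (Icc 1 n).val)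

/-- The Kreweras number of a partition `μ ⊢ n`. -/
noncomputable def krew (n : ℕ) (μ : n.Partition) : ℚ :=
  (1 / ((n : ℚ) - μ.parts.card + 1)) * (n.factorial : ℚ) /
    ((∏ i ∈ Icc 1 n, ((μ.parts.count i).factorial : ℚ)) *
      ((n - μ.parts.card).factorial : ℚ))


/-- Partial sums of a cyclic sequence. -/
def psum (n : ℕ) (c : ZMod (n + 1) → ℕ) (k : ℕ) : ℕ := ∑ i ∈ range k, c (i : ZMod (n + 1))

/-- The ballot condition on contents. -/
def GoodC (n : ℕ) (c : ZMod (n + 1) → ℕ) : Prop := ∀ k ≤ n, k ≤ psum n c k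

lemma psum_succ (n : ℕ) (c : ZMod (n + 1) → ℕ) (k : ℕ) :
    psum n c (k + 1) = psum n c k + c (k : ZMod (n + 1)) := by
  simp [psum, sum_range_succ]

lemma psum_full (n : ℕ) (c : ZMod (n + 1) → ℕ) : psum n c (n + 1) = ∑ x, c x := by
  unfold psum
  refine Finset.sum_bij' (fun i _ => (i : ZMod (n + 1))) (fun x _ => x.val) ?_ ?_ ?_ ?_ ?_
  · simp
  · intro x _
    simpa using ZMod.val_lt x
  · intro i hi
    exact ZMod.val_cast_of_lt (by simpa using hi)
  · intro x _
    simp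
  · simp

lemma psum_rot (n : ℕ) (c : ZMod (n + 1) → ℕ) (r : ZMod (n + 1)) (k : ℕ) :
    psum n c (r.val + k) = psum n c r.val + psum n (fun x => c (x + r)) k := by
  unfold psum
  rw [Finset.sum_range_add]
  congr 1
  refine Finset.sum_congr rfl fun i _ => ?_
  simp [add_comm]

lemma psum_period (n : ℕ) (c : ZMod (n + 1) → ℕ) (k : ℕ) :
    psum n c (k + (n + 1)) = psum n c k + ∑ x, c x := by
  rw [← psum_full]
  unfold psum
  rw [add_comm k, Finset.sum_range_add, add_comm]
  congr 1
  refine Finset.sum_congr rfl fun i _ => ?_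
  have : ((n : ZMod (n + 1)) + 1) = 0 := by
    have := ZMod.natCast_self (n + 1)
    simpa using this
  simp [this]

lemma good_rot_iff (n : ℕ) (c : ZMod (n + 1) → ℕ) (r : ZMod (n + 1)) :
    GoodC n (fun x => c (x + r)) ↔ ∀ k ≤ n, k + psum n c r.val ≤ psum n c (r.val + k) := by
  unfold GoodC
  refine forall₂_congr fun k _ => ?_
  rw [psum_rot]
  omega

lemma cycle_lemma (n : ℕ) (c : ZMod (n + 1) → ℕ) (hc : ∑ x, c x = n) :
    ∃! r : ZMod (n + 1), GoodC n (fun x => c (x + r)) := by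
  simp only [good_rot_iff]
  have per := psum_period n c
  rw [hc] at per
  apply existsUnique_of_exists_of_unique
  · obtain ⟨r, hr, hmin⟩ := Finset.exists_min_image (range (n + 1))
      (fun k => ((n : ℤ) + 1) * ((psum n c k : ℤ) - k) + k) ⟨0, by simp⟩
    simp only [mem_range] at hr hmin
    refine ⟨(r : ZMod (n + 1)), fun k hk => ?_⟩
    rw [ZMod.val_cast_of_lt hr]
    by_cases h : r + k < n + 1
    · have := hmin _ h
      by_contra hlt
      push Not at hlt
      push_cast at this
      have h2 : (psum n c (r + k) : ℤ) + 1 ≤ k + psum n c r := by exact_mod_cast hlt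
      have hk' : (k : ℤ) ≤ n := by exact_mod_cast hk
      nlinarith
    · obtain ⟨s, hs⟩ := Nat.exists_eq_add_of_le (not_lt.mp h)
      have h3 := hmin s (by omega)
      have h4 : r + k = s + (n + 1) := by omega
      rw [h4, per]
      by_contra hlt
      push Not at hlt
      have h5 : psum n c s + r ≤ psum n c r + s := by omega
      have h6 : (psum n c s : ℤ) + r ≤ psum n c r + s := by exact_mod_cast h5
      have h7 : (s : ℤ) < r := by exact_mod_cast (show s < r by omega)
      nlinarith
  · have key : ∀ r s : ZMod (n + 1),
        (∀ k ≤ n, k + psum n c r.val ≤ psum n c (r.val + k)) →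
        (∀ k ≤ n, k + psum n c s.val ≤ psum n c (s.val + k)) → ¬ r.val < s.val := by
      intro r s h1 h2 hlt
      have hs := ZMod.val_lt s
      have a := h1 (s.val - r.val) (by omega)
      have b := h2 (n + 1 - (s.val - r.val)) (by omega)
      rw [show r.val + (s.val - r.val) = s.val by omega] at a
      rw [show s.val + (n + 1 - (s.val - r.val)) = r.val + (n + 1) by omega, per] at b
      omega
    intro r s h1 h2
    apply ZMod.val_injective
    have := key r s h1 h2
    have := key s r h2 h1
    omega

/-- All cyclic arrangements of the multiset `M`. -/
def Arr (n : ℕ) (M : Multiset ℕ) : Set (ZMod (n + 1) → ℕ) :=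
  {c | Multiset.map c (univ : Finset (ZMod (n + 1))).val = M}

lemma Arr_finite (n : ℕ) (M : Multiset ℕ) : (Arr n M).Finite := by
  refine (Set.Finite.pi' (t := fun _ : ZMod (n + 1) => {x | x ∈ M})
    (fun _ => M.toFinset.finite_toSet.subset (by intro x; simp))).subset ?_
  intro c hc i
  rw [Arr, Set.mem_ofPred_eq] at hc
  simp [← hc]

lemma rot_mem_Arr (n : ℕ) (M : Multiset ℕ) (c : ZMod (n + 1) → ℕ) (r : ZMod (n + 1)) :
    (fun x => c (x + r)) ∈ Arr n M ↔ c ∈ Arr n M := by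
  have : Multiset.map (fun x => c (x + r)) (univ : Finset (ZMod (n + 1))).val
      = Multiset.map c (univ : Finset (ZMod (n + 1))).val := by
    have h := congrArg Finset.val (Finset.map_univ_equiv (Equiv.addRight r))
    rw [Finset.map_val] at h
    conv_rhs => rw [← h, Multiset.map_map]
    rfl
  rw [Arr, Set.mem_ofPred_eq, this, Set.mem_ofPred_eq]

lemma card_good (n : ℕ) (M : Multiset ℕ) (hM : M.sum = n) :
    (n + 1) * Nat.card {c : ZMod (n + 1) → ℕ // c ∈ Arr n M ∧ GoodC n c} = (Arr n M).ncard := by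
  classical
  set A := (Arr_finite n M).toFinset with hA
  have hmem : ∀ c, c ∈ A ↔ c ∈ Arr n M := by simp [hA]
  have h1 : (Arr n M).ncard = A.card := Set.ncard_eq_toFinset_card _ _
  have h2 : Nat.card {c : ZMod (n + 1) → ℕ // c ∈ Arr n M ∧ GoodC n c}
      = (A.filter (GoodC n)).card := by
    rw [Nat.subtype_card]
    intro c
    simp [hmem]
  rw [h1, h2]
  have h3 : ∀ r : ZMod (n + 1), (A.filter (fun c => GoodC n (fun x => c (x + r)))).card
      = (A.filter (GoodC n)).card := by
    intro r
    refine Finset.card_bij' (fun c _ => fun x => c (x + r)) (fun c _ => fun x => c (x + (-r)))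
      ?_ ?_ ?_ ?_
    · intro c hc
      simp only [mem_filter, hmem, rot_mem_Arr] at hc ⊢
      exact hc
    · intro c hc
      simp only [mem_filter, hmem, rot_mem_Arr] at hc ⊢
      refine ⟨hc.1, ?_⟩
      simpa using hc.2
    · intro c _; simp
    · intro c _; simp
  have h4 : ∑ r : ZMod (n + 1), (A.filter (fun c => GoodC n (fun x => c (x + r)))).card
      = ∑ c ∈ A, 1 := by
    simp only [Finset.card_filter]
    rw [Finset.sum_comm]
    refine Finset.sum_congr rfl fun c hc => ?_
    have hs : ∑ x, c x = n := by
      rw [hmem] at hc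
      have hc' : Multiset.map c (univ : Finset (ZMod (n + 1))).val = M := hc
      rw [← hc'] at hM
      exact hM
    obtain ⟨r, hr, hu⟩ := cycle_lemma n c hs
    rw [Finset.sum_eq_single r]
    · simp [hr]
    · intro b _ hb
      exact if_neg fun h => hb (hu b h)
    · simp
  simp only [h3, Finset.sum_const, Finset.card_univ, ZMod.card, smul_eq_mul, mul_one] at h4
  exact h4

lemma exists_perm_of_mem_Arr (n : ℕ) (M : Multiset ℕ) (c d : ZMod (n + 1) → ℕ)
    (hc : c ∈ Arr n M) (hd : d ∈ Arr n M) :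
    ∃ g : Equiv.Perm (ZMod (n + 1)), d ∘ g = c := by
  have h : ∀ i, Nonempty ({a // c a = i} ≃ {a // d a = i}) := by
    intro i
    rw [← Fintype.card_eq, Fintype.card_subtype, Fintype.card_subtype]
    have hc' : Multiset.map c (univ : Finset (ZMod (n + 1))).val = M := hc
    have hd' : Multiset.map d (univ : Finset (ZMod (n + 1))).val = M := hd
    have h2 := congrArg (Multiset.count i) (hc'.trans hd'.symm)
    rw [Multiset.count_map, Multiset.count_map] at h2
    simp only [Finset.card_def, Finset.filter_val, eq_comm (b := i)]
    exact h2
  let e := fun i => Classical.choice (h i)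
  refine ⟨Equiv.ofFiberEquiv e, ?_⟩
  ext x
  exact Equiv.ofFiberEquiv_map e x

lemma Arr_nonempty (n : ℕ) (M : Multiset ℕ) (hM : M.card = n + 1) : ∃ c, c ∈ Arr n M := by
  induction M using Quotient.inductionOn with
  | h l =>
    have hl : l.length = n + 1 := hM
    refine ⟨fun x : Fin (n + 1) => l.get (Fin.cast hl.symm x), ?_⟩
    show Multiset.map _ (univ : Finset (Fin (n + 1))).val = _
    rw [Fin.univ_val_map]
    congr 1
    apply List.ext_get
    · simp [hl]
    · intro m h1 h2
      rw [List.get_ofFn]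
      rfl

lemma card_Arr (n : ℕ) (M : Multiset ℕ) (hM : M.card = n + 1) :
    (Arr n M).ncard * ∏ i ∈ M.toFinset, (M.count i).factorial = (n + 1).factorial := by
  classical
  obtain ⟨c0, hc0⟩ := Arr_nonempty n M hM
  set A := (Arr_finite n M).toFinset with hA
  have hmem : ∀ c, c ∈ A ↔ c ∈ Arr n M := by simp [hA]
  have h1 : (Arr n M).ncard = A.card := Set.ncard_eq_toFinset_card _ _
  have h2 : (univ : Finset (Equiv.Perm (ZMod (n + 1)))).card = (n + 1).factorial := by
    rw [Finset.card_univ, Fintype.card_perm, ZMod.card]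
  rw [h1, ← h2]
  symm
  rw [Finset.card_eq_sum_card_fiberwise (f := fun g : Equiv.Perm (ZMod (n + 1)) => c0 ∘ g) (t := A)]
  · rw [← smul_eq_mul, ← Finset.sum_const]
    refine Finset.sum_congr rfl fun c hc => ?_
    rw [hmem] at hc
    obtain ⟨g0, hg0⟩ := exists_perm_of_mem_Arr n M c c0 hc hc0
    have h3 := DomMulAct.stabilizer_card' c
    have h4 : ∏ i ∈ Finset.univ.image c, (Fintype.card ({a // c a = i})).factorial
        = ∏ i ∈ M.toFinset, (M.count i).factorial := by
      have hc' : Multiset.map c (univ : Finset (ZMod (n + 1))).val = M := hc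
      rw [← hc']
      refine Finset.prod_congr (by ext; simp) fun i _ => ?_
      rw [Fintype.card_subtype, Multiset.count_map]
      simp only [Finset.card_def, Finset.filter_val, eq_comm (b := i)]
    rw [← h4, ← h3, Fintype.card_subtype]
    refine Finset.card_bij' (fun g _ => g0⁻¹ * g) (fun g _ => g0 * g) ?_ ?_ ?_ ?_
    · intro g hg
      simp only [mem_filter, mem_univ, true_and] at hg ⊢
      rw [← hg0]
      ext x
      have := congrFun hg x
      have h0 := congrFun hg0 x
      simp only [Function.comp_apply, Equiv.Perm.mul_apply] at *
      rw [show g0 (g0⁻¹ (g x)) = g x from Equiv.apply_symm_apply g0 (g x)]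
      rw [this, h0]
    · intro g hg
      simp only [mem_filter, mem_univ, true_and] at hg ⊢
      rw [Equiv.Perm.coe_mul, ← Function.comp_assoc, hg0, hg]
    · intro g _; simp
    · intro g _; simp
  · intro g _
    simp only [Finset.mem_coe, hmem]
    show Multiset.map _ _ = M
    rw [← (show _ = M from hc0), ← Multiset.map_map]
    congr 1
    have := Finset.map_univ_equiv g
    have := congrArg Finset.val this
    simpa [Finset.map_val] using this

/-- The content of a tuple, as a cyclic sequence. -/
def content (n : ℕ) (p : Fin n → ℕ) : ZMod (n + 1) → ℕ :=
  fun x => (univ.filter fun j => p j = x.val + 1).card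

lemma psum_content (n : ℕ) (p : Fin n → ℕ) (hp : ∀ j, 0 < p j) (k : ℕ) (hk : k ≤ n + 1) :
    psum n (content n p) k = (univ.filter fun j => p j ≤ k).card := by
  induction k with
  | zero =>
    symm
    simp only [psum, range_zero, sum_empty, card_eq_zero, filter_eq_empty_iff]
    intro j _
    have := hp j
    omega
  | succ k ih =>
    rw [psum_succ, ih (by omega), content, ZMod.val_cast_of_lt (by omega),
      ← Finset.card_union_of_disjoint]
    · congr 1
      ext j
      simp only [mem_union, mem_filter, mem_univ, true_and]
      omega
    · rw [Finset.disjoint_filter]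
      intro j _ h
      omega

lemma good_content (n : ℕ) (p : Fin n → ℕ) (hp : IsSortedPF n p) : GoodC n (content n p) := by
  intro k hk
  rw [psum_content n p (fun j => (hp.2 j).1) k (by omega)]
  cases k with
  | zero => simp
  | succ i =>
    have := (Tuple.lt_card_le_iff_apply_le_of_monotone (j := ⟨i, hk⟩) (a := i + 1) hp.1).2
      (hp.2 ⟨i, hk⟩).2
    exact this

lemma content_inj (n : ℕ) (p q : Fin n → ℕ) (hp : IsSortedPF n p) (hq : IsSortedPF n q)
    (h : content n p = content n q) : p = q := by
  have key : ∀ k ≤ n + 1, ∀ j, p j ≤ k ↔ q j ≤ k := by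
    intro k hk j
    have h1 := psum_content n p (fun j => (hp.2 j).1) k hk
    have h2 := psum_content n q (fun j => (hq.2 j).1) k hk
    rw [h] at h1
    have h3 := h1.symm.trans h2
    rw [← Tuple.lt_card_le_iff_apply_le_of_monotone (j := j) (a := k) hp.1,
      ← Tuple.lt_card_le_iff_apply_le_of_monotone (j := j) (a := k) hq.1, h3]
  funext j
  have a := (hp.2 j).2
  have b := (hq.2 j).2
  have hj := j.2
  have h1 := (key (p j) (by omega) j).1 le_rfl
  have h2 := (key (q j) (by omega) j).2 le_rfl
  omega

lemma content_surj (n : ℕ) (c : ZMod (n + 1) → ℕ) (hs : ∑ x, c x = n) (hc : GoodC n c) :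
    ∃ p, IsSortedPF n p ∧ content n p = c := by
  classical
  have mono : Monotone (psum n c) := monotone_nat_of_le_succ fun k => by rw [psum_succ]; omega
  let p : Fin n → ℕ := fun j => ((range (n + 1)).filter fun k => psum n c k ≤ j).card
  have key : ∀ k ≤ n, ∀ j, p j ≤ k ↔ (j : ℕ) < psum n c k := by
    intro k hk j
    constructor
    · intro h
      by_contra hlt
      push Not at hlt
      have : range (k + 1) ⊆ (range (n + 1)).filter fun k => psum n c k ≤ j := by
        intro i hi
        simp only [mem_filter, mem_range] at hi ⊢
        exact ⟨by omega, (mono (by omega)).trans hlt⟩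
      have := Finset.card_le_card this
      rw [card_range] at this
      have : k + 1 ≤ p j := this
      omega
    · intro h
      have : ((range (n + 1)).filter fun k => psum n c k ≤ j) ⊆ range k := by
        intro i hi
        simp only [mem_filter, mem_range] at hi ⊢
        by_contra hik
        have := mono (not_lt.mp hik)
        omega
      have := Finset.card_le_card this
      rw [card_range] at this
      exact this
  have pos : ∀ j, 0 < p j := by
    intro j
    by_contra h
    have := (key 0 (by omega) j).1 (by omega)
    simp [psum] at this
  have pf : IsSortedPF n p := by
    refine ⟨?_, fun i => ⟨pos i, ?_⟩⟩
    · intro i j hij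
      apply Finset.card_le_card
      intro k hk
      simp only [mem_filter] at hk ⊢
      exact ⟨hk.1, hk.2.trans hij⟩
    · rw [key _ (by omega)]
      have := hc (i + 1) (by omega)
      omega
  have fullsum := psum_full n c
  rw [hs] at fullsum
  have lastsum : psum n c n = n := le_antisymm
    (by have := mono (show n ≤ n + 1 by omega); omega) (hc n le_rfl)
  have ple : ∀ k ≤ n + 1, psum n (content n p) k = psum n c k := by
    intro k hk
    rw [psum_content n p pos k hk]
    rcases Nat.lt_or_ge n k with h | h
    · have : k = n + 1 := by omega
      subst this
      rw [fullsum]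
      rw [Finset.filter_true_of_mem, card_univ, Fintype.card_fin]
      intro j _
      have := (pf.2 j).2
      omega
    · simp only [key k h]
      have hle : psum n c k ≤ n := (mono h).trans lastsum.le
      rw [Fin.card_filter_val_lt]
      omega
  refine ⟨p, pf, ?_⟩
  funext x
  have hx := ZMod.val_lt x
  have h1 := ple x.val (by omega)
  have h2 := ple (x.val + 1) (by omega)
  rw [psum_succ, psum_succ] at h2
  simp only [ZMod.natCast_zmod_val] at h2
  omega

lemma map_content (n : ℕ) (p : Fin n → ℕ) (hp : IsSortedPF n p) :
    Multiset.map (content n p) (univ : Finset (ZMod (n + 1))).val =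
      0 ::ₘ Multiset.map (fun k => (univ.filter fun j => p j = k).card) (Icc 1 n).val := by
  have hinj : Function.Injective (fun x : ZMod (n + 1) => x.val + 1) := fun a b h => by
    have h' : a.val + 1 = b.val + 1 := h
    exact ZMod.val_injective (n + 1) (by omega)
  have h1 : (univ : Finset (ZMod (n + 1))).map ⟨fun x => x.val + 1, hinj⟩
      = insert (n + 1) (Icc 1 n) := by
    ext k
    simp only [mem_map, mem_univ, true_and, Function.Embedding.coeFn_mk, mem_insert, mem_Icc]
    constructor
    · rintro ⟨x, rfl⟩
      have := ZMod.val_lt x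
      omega
    · intro h
      refine ⟨((k - 1 : ℕ) : ZMod (n + 1)), ?_⟩
      rw [ZMod.val_cast_of_lt (by omega)]
      omega
  have h2 := congrArg Finset.val h1
  rw [Finset.map_val, Finset.insert_val_of_notMem (by simp)] at h2
  have h3 := congrArg (Multiset.map (fun k => (univ.filter fun j => p j = k).card)) h2
  rw [Multiset.map_map, Multiset.map_cons] at h3
  have h4 : (univ.filter fun j => p j = n + 1).card = 0 := by
    rw [card_eq_zero, filter_eq_empty_iff]
    intro j _
    have := (hp.2 j).2
    omega
  rw [h4] at h3
  exact h3

/-- Parts padded with zeros. -/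
def padded (n : ℕ) (μ : n.Partition) : Multiset ℕ :=
  μ.parts + Multiset.replicate (n + 1 - μ.parts.card) 0

lemma shape_iff (n : ℕ) (p : Fin n → ℕ) (hp : IsSortedPF n p) (μ : n.Partition) :
    shapeOf n p = μ.parts ↔ content n p ∈ Arr n (padded n μ) := by
  rw [Arr, Set.mem_ofPred_eq, map_content n p hp, padded, shapeOf]
  set L := Multiset.map (fun k => (univ.filter fun j => p j = k).card) (Icc 1 n).val with hL
  have hcard : L.card = n := by simp [hL]
  constructor
  · intro h
    have h1 := Multiset.filter_add_not (fun m => 0 < m) L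
    have h2 : Multiset.filter (fun m => ¬ 0 < m) L = Multiset.replicate (n - μ.parts.card) 0 := by
      rw [Multiset.eq_replicate]
      constructor
      · have := congrArg Multiset.card h1
        rw [Multiset.card_add, h, hcard] at this
        omega
      · intro b hb
        have := (Multiset.mem_filter.1 hb).2
        omega
    have h3 : μ.parts.card ≤ n := by
      rw [← h, ← hcard]
      exact Multiset.card_le_card (Multiset.filter_le _ _)
    rw [h, h2] at h1
    rw [← h1, show n + 1 - μ.parts.card = (n - μ.parts.card) + 1 by omega, Multiset.replicate_succ,
      Multiset.add_cons]
  · intro h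
    have h1 := congrArg (Multiset.filter (fun m => 0 < m)) h
    have h2 : Multiset.filter (fun m => 0 < m)
        (Multiset.replicate (n + 1 - μ.parts.card) 0) = 0 := by
      rw [Multiset.filter_eq_nil]
      intro a ha
      simp [Multiset.eq_of_mem_replicate ha]
    have h3 : Multiset.filter (fun m => 0 < m) μ.parts = μ.parts :=
      Multiset.filter_eq_self.2 (fun a ha => μ.parts_pos ha)
    rw [Multiset.filter_cons_of_neg _ (by simp), Multiset.filter_add, h2, h3, add_zero] at h1
    exact h1

lemma parts_card_le (n : ℕ) (μ : n.Partition) : μ.parts.card ≤ n := by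
  have h := Multiset.card_nsmul_le_sum (s := μ.parts) (a := 1) (fun x hx => μ.parts_pos hx)
  rw [μ.parts_sum] at h
  simpa using h

lemma card_pf_eq (n : ℕ) (μ : n.Partition) :
    Nat.card {p : Fin n → ℕ // IsSortedPF n p ∧ shapeOf n p = μ.parts} =
      Nat.card {c : ZMod (n + 1) → ℕ // c ∈ Arr n (padded n μ) ∧ GoodC n c} := by
  refine Nat.card_congr (Equiv.ofBijective (fun p => ⟨content n p.1,
    (shape_iff n p.1 p.2.1 μ).1 p.2.2, good_content n p.1 p.2.1⟩) ⟨?_, ?_⟩)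
  · intro p q h
    exact Subtype.ext (content_inj n p.1 q.1 p.2.1 q.2.1 (congrArg Subtype.val h))
  · rintro ⟨c, hc, hg⟩
    have hs : ∑ x, c x = n := by
      have h := congrArg Multiset.sum
        (show Multiset.map c (univ : Finset (ZMod (n + 1))).val = padded n μ from hc)
      rw [padded, Multiset.sum_add, μ.parts_sum, Multiset.sum_replicate, smul_zero, add_zero] at h
      exact h
    obtain ⟨p, hp, rfl⟩ := content_surj n c hs hg
    exact ⟨⟨p, hp, (shape_iff n p hp μ).2 hc⟩, rfl⟩

lemma card_pf (n : ℕ) (μ : n.Partition) :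
    (Nat.card {p : Fin n → ℕ // IsSortedPF n p ∧ shapeOf n p = μ.parts} : ℚ) = krew n μ := by
  have hl := parts_card_le n μ
  have h1 := card_good n (padded n μ) (by simp [padded, μ.parts_sum])
  have h2 := card_Arr n (padded n μ) (by simp [padded]; omega)
  rw [← h1, ← card_pf_eq] at h2
  have hz : μ.parts.count 0 = 0 := by
    rw [Multiset.count_eq_zero]
    intro h
    exact absurd (μ.parts_pos h) (by simp)
  have h3 : ∏ i ∈ (padded n μ).toFinset, ((padded n μ).count i).factorial =
      (∏ i ∈ Icc 1 n, (μ.parts.count i).factorial) * (n - μ.parts.card + 1).factorial := by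
    have hsub : (padded n μ).toFinset ⊆ insert 0 (Icc 1 n) := by
      intro i hi
      simp only [padded, Multiset.mem_toFinset, Multiset.mem_add, mem_insert, mem_Icc] at hi ⊢
      rcases hi with hi | hi
      · right
        refine ⟨μ.parts_pos hi, ?_⟩
        have := Multiset.single_le_sum (fun x _ => Nat.zero_le x) i hi
        rwa [μ.parts_sum] at this
      · left
        exact Multiset.eq_of_mem_replicate hi
    rw [Finset.prod_subset hsub, Finset.prod_insert (by simp), mul_comm]
    · congr 1
      · refine Finset.prod_congr rfl fun i hi => ?_
        have : 0 ≠ i := by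
          have := (mem_Icc.1 hi).1
          omega
        simp [padded, Multiset.count_replicate, this]
      · simp [padded, hz]
        congr 1
        omega
    · intro i _ hi
      rw [Multiset.mem_toFinset] at hi
      rw [Multiset.count_eq_zero.2 hi]
      rfl
  rw [h3] at h2
  have h4 := congrArg (Nat.cast : ℕ → ℚ) h2
  set X := Nat.card {p : Fin n → ℕ // IsSortedPF n p ∧ shapeOf n p = μ.parts}
  obtain ⟨d, hd⟩ := Nat.exists_eq_add_of_le hl
  rw [krew]
  have e1 : n - μ.parts.card = d := by omega
  have e2 : (n : ℚ) - μ.parts.card = d := by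
    rw [eq_comm, eq_sub_iff_add_eq]
    exact_mod_cast (by omega : d + μ.parts.card = n)
  rw [e1, Nat.factorial_succ d, Nat.factorial_succ n] at h4
  rw [e1, e2]
  push_cast at h4
  have p1 : (∏ i ∈ Icc 1 n, ((μ.parts.count i).factorial : ℚ)) ≠ 0 :=
    Finset.prod_ne_zero_iff.2 fun i _ => by positivity
  have p2 : (d.factorial : ℚ) ≠ 0 := by positivity
  have p3 : (d : ℚ) + 1 ≠ 0 := by positivity
  have p4 : (n : ℚ) + 1 ≠ 0 := by positivity
  rw [eq_div_iff (mul_ne_zero p1 p2), one_div, inv_mul_eq_div, eq_div_iff p3]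
  apply mul_left_cancel₀ p4
  rw [← h4]
  ring

lemma image_eq (n : ℕ) (p : Fin n → ℕ) (hp : IsSortedPF n p) :
    (Icc 1 n).filter (fun k => 0 < (univ.filter fun j => p j = k).card) = image p univ := by
  ext k
  simp only [mem_filter, mem_Icc, card_pos, mem_image, mem_univ, true_and]
  constructor
  · rintro ⟨_, j, hj⟩
    exact ⟨j, by simpa using hj⟩
  · rintro ⟨j, rfl⟩
    have := hp.2 j
    refine ⟨by omega, j, by simp⟩

lemma card_shape (n : ℕ) (p : Fin n → ℕ) (hp : IsSortedPF n p) :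
    (shapeOf n p).card = (image p univ).card := by
  rw [← image_eq n p hp, shapeOf, Multiset.filter_map, Multiset.card_map]
  rfl

lemma card_sign (n : ℕ) (p : Fin n → ℕ) (hp : IsSortedPF n p) :
    Nat.card {σ : Fin n → ℤ // IsSignVector n p σ} = 2 ^ (image p univ).card := by
  classical
  rw [Nat.subtype_card (Fintype.piFinset fun k : Fin n =>
    if (k : ℕ) + 1 ∈ image p univ then ({-1, 1} : Finset ℤ) else {0})]
  · rw [Fintype.card_piFinset]
    have : ∀ k : Fin n, (if (k : ℕ) + 1 ∈ image p univ then ({-1, 1} : Finset ℤ) else {0}).card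
        = if (k : ℕ) + 1 ∈ image p univ then 2 else 1 := by
      intro k
      split_ifs <;> rfl
    simp only [this]
    rw [Finset.prod_ite, Finset.prod_const, Finset.prod_const_one, mul_one]
    congr 1
    refine Finset.card_bij (fun k _ => (k : ℕ) + 1) ?_ ?_ ?_
    · intro k hk
      exact (mem_filter.1 hk).2
    · intro a _ b _ h
      exact Fin.ext (by omega)
    · intro b hb
      obtain ⟨j, _, rfl⟩ := mem_image.1 hb
      have h := hp.2 j
      have e : p j - 1 + 1 = p j := by omega
      refine ⟨⟨p j - 1, by omega⟩, ?_, e⟩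
      simp only [mem_filter, mem_univ, true_and, e]
      exact hb
  · intro σ
    rw [Fintype.mem_piFinset, IsSignVector]
    refine forall_congr' fun k => ?_
    by_cases h : (k : ℕ) + 1 ∈ image p univ
    · rw [if_pos h]
      have h' : ¬ ∀ j : Fin n, p j ≠ (k : ℕ) + 1 := by
        simpa using h
      simp only [h', iff_false, mem_insert, mem_singleton]
      omega
    · rw [if_neg h]
      have h' : ∀ j : Fin n, p j ≠ (k : ℕ) + 1 := by
        simpa using h
      simp only [iff_true_intro h', iff_true, mem_singleton]
      omega

/-- For each sorted parking function `p` with `ℓ` distinct values (i.e. `ℓ`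
parts in its shape), there are exactly `2^ℓ` valid sign vectors; consequently,
the number of sorted naive shifted parking functions of size `n` of shape `μ`
is `2^{ℓ(μ)} · Krew(μ)`. -/
theorem card_signVectors_and_card_by_shape (n : ℕ) :
    (∀ p : Fin n → ℕ, IsSortedPF n p →
      Nat.card {σ : Fin n → ℤ // IsSignVector n p σ} =
        2 ^ (Finset.image p Finset.univ).card) ∧
    ∀ μ : n.Partition,
      (Nat.card {pσ : (Fin n → ℕ) × (Fin n → ℤ) //
          IsSortedPF n pσ.1 ∧ IsSignVector n pσ.1 pσ.2 ∧ shapeOf n pσ.1 = μ.parts} : ℚ) =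
        2 ^ μ.parts.card * krew n μ := by
  refine ⟨card_sign n, fun μ => ?_⟩
  have e : {pσ : (Fin n → ℕ) × (Fin n → ℤ) //
      IsSortedPF n pσ.1 ∧ IsSignVector n pσ.1 pσ.2 ∧ shapeOf n pσ.1 = μ.parts} ≃
      Σ p : {p : Fin n → ℕ // IsSortedPF n p ∧ shapeOf n p = μ.parts},
        {σ : Fin n → ℤ // IsSignVector n p.1 σ} :=
    { toFun := fun x => ⟨⟨x.1.1, x.2.1, x.2.2.2⟩, ⟨x.1.2, x.2.2.1⟩⟩
      invFun := fun y => ⟨(y.1.1, y.2.1), y.1.2.1, y.2.2, y.1.2.2⟩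
      left_inv := fun _ => rfl
      right_inv := fun _ => rfl }
  have fin : Finite {p : Fin n → ℕ // IsSortedPF n p ∧ shapeOf n p = μ.parts} := by
    refine Set.Finite.subset (Set.Finite.pi' (t := fun _ : Fin n => Set.Iic n)
      (fun _ => Set.finite_Iic n)) ?_
    intro p hp i
    have := (hp.1.2 i).2
    show p i ≤ n
    omega
  have := Fintype.ofFinite {p : Fin n → ℕ // IsSortedPF n p ∧ shapeOf n p = μ.parts}
  have fin2 : ∀ p : {p : Fin n → ℕ // IsSortedPF n p ∧ shapeOf n p = μ.parts},
      Finite {σ : Fin n → ℤ // IsSignVector n p.1 σ} := fun p =>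
    Nat.finite_of_card_ne_zero (by rw [card_sign n p.1 p.2.1]; positivity)
  have h : ∀ p : {p : Fin n → ℕ // IsSortedPF n p ∧ shapeOf n p = μ.parts},
      Nat.card {σ : Fin n → ℤ // IsSignVector n p.1 σ} = 2 ^ μ.parts.card := by
    intro p
    rw [card_sign n p.1 p.2.1, ← card_shape n p.1 p.2.1, p.2.2]
  rw [Nat.card_congr e, Nat.card_sigma, ← card_pf]
  simp only [h, Finset.sum_const, Finset.card_univ, smul_eq_mul, Nat.card_eq_fintype_card]
  push_cast
  ring
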